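/- Let m ≥ 1, s ∈ Sp_{2m} and x ∈ SH_m. Then φ(s[x]) φ(s[x])ᵀ = s φ(x) φ(x)ᵀ sᵀ, where s[x] is the symplectic Möbius action of s on x. -/

import Mathlib

open Matrix

/-- Membership in the real symplectic group Sp_{2m}, in block form. -/
def inSp {m : ℕ} (s : Matrix (Fin m ⊕ Fin m) (Fin m ⊕ Fin m) ℝ) : Prop :=
  s.toBlocks₁₁ * s.toBlocks₁₂ᵀ = s.toBlocks₁₂ * s.toBlocks₁₁ᵀ ∧
  s.toBlocks₂₁ * s.toBlocks₂₂ᵀ = s.toBlocks₂₂ * s.toBlocks₂₁ᵀ ∧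
  s.toBlocks₁₁ * s.toBlocks₂₂ᵀ - s.toBlocks₁₂ * s.toBlocks₂₁ᵀ = 1

/-- The symplectic Möbius action s[x] = (a x + b)(c x + d)⁻¹. -/
noncomputable def mobius {m : ℕ} (s : Matrix (Fin m ⊕ Fin m) (Fin m ⊕ Fin m) ℝ)
    (x : Matrix (Fin m) (Fin m) ℂ) : Matrix (Fin m) (Fin m) ℂ :=
  (s.toBlocks₁₁.map ((↑) : ℝ → ℂ) * x + s.toBlocks₁₂.map ((↑) : ℝ → ℂ)) *
  (s.toBlocks₂₁.map ((↑) : ℝ → ℂ) * x + s.toBlocks₂₂.map ((↑) : ℝ → ℂ))⁻¹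

/-!
A symplectic matrix `M` acts on Lagrangian frames, and `M Mᵀ` depends only on the point `M[i]`: if
`M` and `N` carry the frame `[i; 1]` to the same subspace, then `K = N⁻¹ M` preserves the span of
`[i; 1]`, which is the `i`-eigenspace of `J`, so the real matrix `K` commutes with `J`; being
symplectic, it is then orthogonal, and `M Mᵀ = N K Kᵀ Nᵀ = N Nᵀ`. The theorem is the case
`M = s φ(x)`, `N = φ(s[x])`, as `φ(x)` is symplectic and carries `i` to `x`.

If `[C D]` is the lower half of a symplectic `M`, then `(iC + D)(iC + D)ᴴ = C Cᵀ + D Dᵀ` is a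
diagonal block of the positive definite `M Mᵀ`; for `M = s φ(x)` this makes `c x + d` invertible.
-/

variable {k n : Type*}

section Complexification

/-- The complex matrix `u + iv`. -/
noncomputable def ofReIm (u v : Matrix k n ℝ) : Matrix k n ℂ :=
  u.map Complex.ofRealHom + Complex.I • v.map Complex.ofRealHom

lemma ofReIm_inj {u v u' v' : Matrix k n ℝ} :
    ofReIm u v = ofReIm u' v' ↔ u = u' ∧ v = v' := by
  simp [← Matrix.ext_iff, ofReIm, Complex.ext_iff, forall_and]

lemma ofReIm_mul {l m : Type*} [Fintype l] (a b : Matrix k l ℝ) (c d : Matrix l m ℝ) :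
    ofReIm a b * ofReIm c d = ofReIm (a * c - b * d) (a * d + b * c) := by
  ext i j
  apply Complex.ext <;>
    simp [ofReIm, mul_apply, ← Finset.sum_add_distrib, ← Finset.sum_sub_distrib]

end Complexification

variable [Fintype n] [DecidableEq n]

section Frame

/-- The basis `[x; 1]` of the Lagrangian subspace of `ℂ²ⁿ` attached to a point `x` of the Siegel
upper half space. -/
def frame (x : Matrix n n ℂ) : Matrix (n ⊕ n) n ℂ :=
  fromRows x 1

variable (n) in
/-- The frame `[i; 1]` of the base point `i`. -/
noncomputable def baseFrame : Matrix (n ⊕ n) n ℂ :=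
  frame (Complex.I • 1)

lemma map_mul_baseFrame (M : Matrix k (n ⊕ n) ℝ) :
    M.map Complex.ofRealHom * baseFrame n = ofReIm M.toCols₂ M.toCols₁ := by
  have hM : M.map Complex.ofRealHom =
      fromCols (M.toCols₁.map Complex.ofRealHom) (M.toCols₂.map Complex.ofRealHom) :=
    (fromCols_toCols _).symm
  rw [hM, baseFrame, frame, fromCols_mul_fromRows, Matrix.mul_smul, Matrix.mul_one, Matrix.mul_one,
    add_comm, ofReIm]

lemma map_mul_baseFrame_inj {M N : Matrix k (n ⊕ n) ℝ} :
    M.map Complex.ofRealHom * baseFrame n = N.map Complex.ofRealHom * baseFrame n ↔ M = N := by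
  rw [map_mul_baseFrame, map_mul_baseFrame, ofReIm_inj, and_comm, ← fromCols_ext_iff,
    fromCols_toCols, fromCols_toCols]

lemma J_mul_baseFrame : J n ℂ * baseFrame n = Complex.I • baseFrame n := by
  rw [J, baseFrame, frame, fromBlocks_mul_fromRows]
  ext (i | i) j <;> simp [← mul_assoc]

lemma commute_J_of_map_mul_baseFrame_eq {M : Matrix (n ⊕ n) (n ⊕ n) ℝ} {q : Matrix n n ℂ}
    (h : M.map Complex.ofRealHom * baseFrame n = baseFrame n * q) : Commute M (J n ℝ) := by
  refine map_mul_baseFrame_inj.mp ?_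
  calc (M * J n ℝ).map Complex.ofRealHom * baseFrame n
      = Complex.I • (M.map Complex.ofRealHom * baseFrame n) := by
        rw [Matrix.map_mul, map_J, Matrix.mul_assoc, J_mul_baseFrame, Matrix.mul_smul]
    _ = J n ℂ * baseFrame n * q := by rw [h, J_mul_baseFrame, Matrix.smul_mul]
    _ = (J n ℝ * M).map Complex.ofRealHom * baseFrame n := by
        rw [Matrix.mul_assoc, ← h, Matrix.map_mul, map_J, Matrix.mul_assoc]

end Frame

section Symplectic

lemma mul_transpose_eq_one_of_commute_J {R : Type*} [CommRing R] {M : Matrix (n ⊕ n) (n ⊕ n) R}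
    (hM : M ∈ symplecticGroup n R) (h : Commute M (J n R)) : M * Mᵀ = 1 := by
  have hJ : IsUnit (J n R) := (isUnit_iff_isUnit_det _).mpr (isUnit_det_J n R)
  refine hJ.mul_left_cancel ?_
  rw [← mul_assoc, ← h.eq, SymplecticGroup.mem_iff.mp hM, mul_one]

lemma nonsing_inv_mem_symplecticGroup {R : Type*} [CommRing R] {M : Matrix (n ⊕ n) (n ⊕ n) R}
    (hM : M ∈ symplecticGroup n R) : M⁻¹ ∈ symplecticGroup n R := by
  rw [← SymplecticGroup.coe_inv' ⟨M, hM⟩]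
  exact Subtype.property _

theorem mul_transpose_eq_of_map_mul_baseFrame_eq {M N : Matrix (n ⊕ n) (n ⊕ n) ℝ}
    {q : Matrix n n ℂ} (hM : M ∈ symplecticGroup n ℝ) (hN : N ∈ symplecticGroup n ℝ)
    (h : M.map Complex.ofRealHom * baseFrame n = N.map Complex.ofRealHom * baseFrame n * q) :
    M * Mᵀ = N * Nᵀ := by
  have hN_det : IsUnit N.det := SymplecticGroup.symplectic_det hN
  have hM_eq : M = N * (N⁻¹ * M) := (mul_nonsing_inv_cancel_left N M hN_det).symm
  have hK_fix : (N⁻¹ * M).map Complex.ofRealHom * baseFrame n = baseFrame n * q := by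
    rw [Matrix.map_mul, Matrix.mul_assoc, h, ← Matrix.mul_assoc, ← Matrix.mul_assoc,
      ← Matrix.map_mul, nonsing_inv_mul N hN_det]
    simp
  have hK_orth : (N⁻¹ * M) * (N⁻¹ * M)ᵀ = 1 :=
    mul_transpose_eq_one_of_commute_J (mul_mem (nonsing_inv_mem_symplecticGroup hN) hM)
      (commute_J_of_map_mul_baseFrame_eq hK_fix)
  calc M * Mᵀ = N * ((N⁻¹ * M) * (N⁻¹ * M)ᵀ) * Nᵀ := by
        conv_lhs => rw [hM_eq, transpose_mul]
        simp only [mul_assoc]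
    _ = N * Nᵀ := by rw [hK_orth, mul_one]

theorem isUnit_toRows₂_map_mul_baseFrame {M : Matrix (n ⊕ n) (n ⊕ n) ℝ}
    (hM : M ∈ symplecticGroup n ℝ) : IsUnit (M.map Complex.ofRealHom * baseFrame n).toRows₂ := by
  have hMM : (M * Mᵀ).PosDef := by
    rw [← conjTranspose_eq_transpose_of_trivial]
    exact .mul_conjTranspose_self M <| vecMul_injective_of_isUnit <|
      (isUnit_iff_isUnit_det M).mpr (SymplecticGroup.symplectic_det hM)
  have hMM₂₂ : IsUnit (M * Mᵀ).toBlocks₂₂ := (hMM.submatrix Sum.inr_injective).isUnit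
  set C := M.toBlocks₂₁
  set D := M.toBlocks₂₂
  have hCD : C * Dᵀ = D * Cᵀ := by
    rw [← SymplecticGroup.transpose_mem_iff, ← fromBlocks_toBlocks M, fromBlocks_transpose,
      SymplecticGroup.fromBlocks_mem_iff] at hM
    simpa using hM.2.1
  have hMM₂₂_eq : (M * Mᵀ).toBlocks₂₂ = D * Dᵀ + C * Cᵀ := by
    rw [← fromBlocks_toBlocks M, fromBlocks_transpose, fromBlocks_multiply,
      toBlocks_fromBlocks₂₂, add_comm]
  have h_mul : ofReIm D C * ofReIm Dᵀ (-Cᵀ) = (M * Mᵀ).toBlocks₂₂.map Complex.ofRealHom := by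
    rw [ofReIm_mul, hMM₂₂_eq, hCD]
    simp [ofReIm]
  have h_unit : IsUnit (ofReIm D C * ofReIm Dᵀ (-Cᵀ)) := by
    rw [h_mul]
    exact hMM₂₂.map Complex.ofRealHom.mapMatrix
  rw [map_mul_baseFrame]
  exact isUnit_of_mul_isUnit_left h_unit

end Symplectic

section Phi

/-- The matrix `φ(u + iv)`, carrying the base point `i` to `u + iv`, as a function of `u` and of the
square root `r` of `v`. -/
noncomputable def phi {R : Type*} [CommRing R] (u r : Matrix n n R) : Matrix (n ⊕ n) (n ⊕ n) R :=
  fromBlocks r (u * r⁻¹) 0 r⁻¹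

lemma phi_mem_symplecticGroup {R : Type*} [CommRing R] {u r : Matrix n n R} (hu : u.IsSymm)
    (hr : r.IsSymm) (hr_unit : IsUnit r) : phi u r ∈ symplecticGroup n R := by
  have hdet := (isUnit_iff_isUnit_det r).mp hr_unit
  have hinv : r⁻¹ᵀ = r⁻¹ := by rw [transpose_nonsing_inv, hr.eq]
  rw [phi, SymplecticGroup.fromBlocks_mem_iff]
  simp [transpose_mul, hu.eq, hr.eq, hinv, mul_assoc, hdet]

lemma map_phi_mul_baseFrame (u : Matrix n n ℝ) {r : Matrix n n ℝ} (hr : IsUnit r) :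
    (phi u r).map Complex.ofRealHom * baseFrame n =
      frame (ofReIm u (r * r)) * (r⁻¹).map Complex.ofRealHom := by
  have hrr : r * r * r⁻¹ = r := mul_nonsing_inv_cancel_right _ _ ((isUnit_iff_isUnit_det r).mp hr)
  rw [phi, fromBlocks_map, baseFrame, frame, frame, fromBlocks_mul_fromRows, fromRows_mul, ofReIm,
    Matrix.add_mul, Matrix.smul_mul, ← Matrix.map_mul, ← Matrix.map_mul, hrr]
  simp [add_comm]

lemma frame_eq_map_phi_mul_baseFrame_mul (u : Matrix n n ℝ) {r : Matrix n n ℝ} (hr : IsUnit r) :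
    frame (ofReIm u (r * r)) =
      (phi u r).map Complex.ofRealHom * baseFrame n * r.map Complex.ofRealHom := by
  rw [map_phi_mul_baseFrame u hr, Matrix.mul_assoc, ← Matrix.map_mul,
    nonsing_inv_mul r ((isUnit_iff_isUnit_det r).mp hr)]
  simp

/-- The hypothesis `h` says that `s` maps `u + i r²` to `u' + i r'²`, with automorphy factor `q`. -/
theorem phi_mul_transpose_eq_of_map_mul_frame_eq {s : Matrix (n ⊕ n) (n ⊕ n) ℝ}
    {u r u' r' : Matrix n n ℝ} {q : Matrix n n ℂ} (hs : s ∈ symplecticGroup n ℝ)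
    (hu : u.IsSymm) (hr : r.IsSymm) (hr_unit : IsUnit r)
    (hu' : u'.IsSymm) (hr' : r'.IsSymm) (hr'_unit : IsUnit r')
    (h : s.map Complex.ofRealHom * frame (ofReIm u (r * r)) =
      frame (ofReIm u' (r' * r')) * q) :
    phi u' r' * (phi u' r')ᵀ = s * (phi u r * (phi u r)ᵀ) * sᵀ := by
  have h_frame : (s * phi u r).map Complex.ofRealHom * baseFrame n =
      (phi u' r').map Complex.ofRealHom * baseFrame n *
        (r'.map Complex.ofRealHom * q * (r⁻¹).map Complex.ofRealHom) := by
    calc (s * phi u r).map Complex.ofRealHom * baseFrame n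
        = frame (ofReIm u' (r' * r')) * q * (r⁻¹).map Complex.ofRealHom := by
          rw [Matrix.map_mul, Matrix.mul_assoc, map_phi_mul_baseFrame u hr_unit,
            ← Matrix.mul_assoc, h]
      _ = _ := by
          rw [frame_eq_map_phi_mul_baseFrame_mul u' hr'_unit]
          simp only [Matrix.mul_assoc]
  rw [← mul_transpose_eq_of_map_mul_baseFrame_eq
    (mul_mem hs (phi_mem_symplecticGroup hu hr hr_unit))
    (phi_mem_symplecticGroup hu' hr' hr'_unit) h_frame, transpose_mul]
  simp only [mul_assoc]

end Phi

section AutomorphyFactor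

/-- The automorphy factor `c x + d` of a `2n × 2n` matrix `s` at `x`. -/
def automorphyFactor (s : Matrix (n ⊕ n) (n ⊕ n) ℝ) (x : Matrix n n ℂ) : Matrix n n ℂ :=
  s.toBlocks₂₁.map Complex.ofRealHom * x + s.toBlocks₂₂.map Complex.ofRealHom

lemma map_mul_frame (s : Matrix (n ⊕ n) (n ⊕ n) ℝ) (x : Matrix n n ℂ) :
    s.map Complex.ofRealHom * frame x =
      fromRows (s.toBlocks₁₁.map Complex.ofRealHom * x + s.toBlocks₁₂.map Complex.ofRealHom)
        (automorphyFactor s x) := by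
  conv_lhs => rw [← fromBlocks_toBlocks s]
  rw [fromBlocks_map, frame, fromBlocks_mul_fromRows, Matrix.mul_one, Matrix.mul_one,
    automorphyFactor]

theorem isUnit_automorphyFactor {s : Matrix (n ⊕ n) (n ⊕ n) ℝ} {u r : Matrix n n ℝ}
    (hs : s ∈ symplecticGroup n ℝ) (hu : u.IsSymm) (hr : r.IsSymm) (hr_unit : IsUnit r) :
    IsUnit (automorphyFactor s (ofReIm u (r * r))) := by
  have h_unit := isUnit_toRows₂_map_mul_baseFrame
    (mul_mem hs (phi_mem_symplecticGroup hu hr hr_unit))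
  rw [Matrix.map_mul, Matrix.mul_assoc, map_phi_mul_baseFrame u hr_unit, ← Matrix.mul_assoc,
    map_mul_frame, fromRows_mul, toRows₂_fromRows] at h_unit
  exact isUnit_of_mul_isUnit_left h_unit

variable {m : ℕ} {s : Matrix (Fin m ⊕ Fin m) (Fin m ⊕ Fin m) ℝ}

lemma inSp_iff_mem_symplecticGroup : inSp s ↔ s ∈ symplecticGroup (Fin m) ℝ := by
  rw [← SymplecticGroup.transpose_mem_iff, ← fromBlocks_toBlocks s, fromBlocks_transpose,
    SymplecticGroup.fromBlocks_mem_iff]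
  simp [inSp]

lemma map_mul_frame_eq_frame_mobius_mul {x : Matrix (Fin m) (Fin m) ℂ}
    (hx : IsUnit (automorphyFactor s x)) :
    s.map Complex.ofRealHom * frame x = frame (mobius s x) * automorphyFactor s x := by
  rw [map_mul_frame, frame, fromRows_mul, Matrix.one_mul]
  congr 1
  exact (nonsing_inv_mul_cancel_right _ _ ((isUnit_iff_isUnit_det _).mp hx)).symm

end AutomorphyFactor

/-- φ(s[x]) φ(s[x])ᵀ = s φ(x) φ(x)ᵀ sᵀ for s ∈ Sp_{2m} and
x ∈ SH_m.  Here x = u + iv with v^{1/2} = r, and s[x] = u' + iv' with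
v'^{1/2} = r'. -/
theorem phi_equivariance (m : ℕ) (hm : 1 ≤ m)
    (s : Matrix (Fin m ⊕ Fin m) (Fin m ⊕ Fin m) ℝ) (hs : inSp s)
    (u v : Matrix (Fin m) (Fin m) ℝ) (hu : uᵀ = u) (hv : v.PosDef)
    (x : Matrix (Fin m) (Fin m) ℂ)
    (hx : x = u.map ((↑) : ℝ → ℂ) + Complex.I • v.map ((↑) : ℝ → ℂ))
    (r : Matrix (Fin m) (Fin m) ℝ) (hr : r.PosDef ∧ r * r = v)
    (u' v' : Matrix (Fin m) (Fin m) ℝ) (hu' : u'ᵀ = u') (hv' : v'.PosDef)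
    (hx' : mobius s x = u'.map ((↑) : ℝ → ℂ) + Complex.I • v'.map ((↑) : ℝ → ℂ))
    (r' : Matrix (Fin m) (Fin m) ℝ) (hr' : r'.PosDef ∧ r' * r' = v') :
    (Matrix.fromBlocks r' (u' * r'⁻¹) 0 r'⁻¹) *
        (Matrix.fromBlocks r' (u' * r'⁻¹) 0 r'⁻¹)ᵀ
      = s * ((Matrix.fromBlocks r (u * r⁻¹) 0 r⁻¹) *
          (Matrix.fromBlocks r (u * r⁻¹) 0 r⁻¹)ᵀ) * sᵀ := by
  obtain ⟨hr_pos, rfl⟩ := hr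
  obtain ⟨hr'_pos, rfl⟩ := hr'
  have hs_mem : s ∈ symplecticGroup (Fin m) ℝ := inSp_iff_mem_symplecticGroup.mp hs
  have hr_symm : r.IsSymm := isHermitian_iff_isSymm.mp hr_pos.isHermitian
  have hr'_symm : r'.IsSymm := isHermitian_iff_isSymm.mp hr'_pos.isHermitian
  have hx_ofReIm : x = ofReIm u (r * r) := hx
  have hx'_ofReIm : mobius s x = ofReIm u' (r' * r') := hx'
  have hx_unit : IsUnit (automorphyFactor s x) :=
    hx_ofReIm ▸ isUnit_automorphyFactor hs_mem hu hr_symm hr_pos.isUnit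
  have h_frame := map_mul_frame_eq_frame_mobius_mul hx_unit
  rw [hx'_ofReIm, hx_ofReIm] at h_frame
  exact phi_mul_transpose_eq_of_map_mul_frame_eq hs_mem hu hr_symm hr_pos.isUnit
    hu' hr'_symm hr'_pos.isUnit h_frame
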